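/- Let M ≥ m ≥ 0 be integers and H ∈ (0,1). The family of processes X^{(h)} = Δ_h^M J^m B^H, h > 0, is parametrized (m+H)-self-similar: the law of (h^{−(m+H)} (Δ_h^M J^m B^H)_{ht})_{t∈ℝ} does not depend on h > 0. Moreover each Δ_h^M J^m B^H has stationary increments. -/

import Mathlib

/-!
Both claims reduce to an equality in law for `B` itself. Two processes with continuous paths and
the same finite-dimensional distributions keep this property after applying `Δ_a` (a finite linear
combination of values) and `J` (a pointwise limit of Riemann sums), hence after `Δ_a^M J^m`:
`SameFDD.dhIter_Jiter`.

* Self-similarity: on each path `h^{-(m+H)} (Δ_h^M J^m B)(h t)` equals `(Δ_1^M J^m B')(t)` with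
  `B'(t) = h^{-H} B(h t)`, and `B'` has the law of `B` (`sameFDD_scale`). So the rescaled process
  has the law of `Δ_1^M J^m B` for every `h`.
* Stationary increments: for `m ≤ M`, `Δ_h^M J^m = Δ_h^{M-m} (Δ_h J)^m`, and `Δ_h J` is the moving
  integral `∫_t^{t+h}`, which commutes with translations and maps constants to constants. Thus
  `Δ_{h'} Δ_h^M J^m` sends `B(· + u) - B(u)` to the translate by `u` of its value at `B`
  (`dhIter_Jiter_shift`), while `B(· + u) - B(u)` has the law of `B` (`sameFDD_shift`).

The two equalities in law for `B` hold since a centered Gaussian process is determined by its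
covariance (`CenteredGaussianProcess.sameFDD`).
-/

open MeasureTheory ProbabilityTheory Real

/-- Integral operator `(J X)(t) = ∫_0^t X(r) dr`. -/
noncomputable def J (X : ℝ → ℝ) : ℝ → ℝ := fun t => ∫ r in (0:ℝ)..t, X r

/-- `m`-fold iterated integral operator. -/
noncomputable def Jiter (m : ℕ) : (ℝ → ℝ) → (ℝ → ℝ) := J^[m]

/-- Forward difference operator with step `h`. -/
def dh (h : ℝ) (X : ℝ → ℝ) : ℝ → ℝ := fun t => X (t + h) - X t

/-- `M`-th iterated forward difference with step `h`. -/
def dhIter (M : ℕ) (h : ℝ) : (ℝ → ℝ) → (ℝ → ℝ) := (dh h)^[M]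

/-- A process is centered Gaussian if every finite linear combination of its values is a
centered real Gaussian random variable. -/
def CenteredGaussianProcess {Ω : Type*} [MeasurableSpace Ω] (P : Measure Ω)
    (X : Ω → ℝ → ℝ) : Prop :=
  ∀ (n : ℕ) (t c : Fin n → ℝ), ∃ v : NNReal,
    Measure.map (fun ω => ∑ i, c i * X ω (t i)) P = gaussianReal 0 v

/-- A process `X` is stationary if the finite-dimensional distributions of
`(X_{t+u})_t` do not depend on `u`. -/
def StationaryProc {Ω : Type*} [MeasurableSpace Ω] (P : Measure Ω)
    (X : Ω → ℝ → ℝ) : Prop :=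
  ∀ (u : ℝ) (n : ℕ) (t : Fin n → ℝ),
    Measure.map (fun ω (i : Fin n) => X ω (t i + u)) P
      = Measure.map (fun ω (i : Fin n) => X ω (t i)) P

/-- Two processes on the same probability space have the same finite-dimensional distributions;
almost everywhere measurability of the finite-dimensional vectors is part of the notion. -/
def SameFDD {Ω : Type*} [MeasurableSpace Ω] (P : Measure Ω) (X Y : Ω → ℝ → ℝ) : Prop :=
  ∀ (n : ℕ) (t : Fin n → ℝ),
    IdentDistrib (fun ω (i : Fin n) => X ω (t i)) (fun ω (i : Fin n) => Y ω (t i)) P P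

/-! ### Gaussian laws are determined by the covariance -/

section Gaussian

variable {Ω : Type*} [MeasurableSpace Ω] {P : Measure Ω}

lemma CenteredGaussianProcess.aemeasurable_sum {X : Ω → ℝ → ℝ}
    (hX : CenteredGaussianProcess P X) {n : ℕ} (t c : Fin n → ℝ) :
    AEMeasurable (fun ω => ∑ i, c i * X ω (t i)) P := by
  obtain ⟨v, hv⟩ := hX n t c
  -- `Measure.map` of a function that is not a.e. measurable is zero, unlike a Gaussian law.
  apply AEMeasurable.of_map_ne_zero
  rw [hv]
  exact IsProbabilityMeasure.ne_zero _

lemma CenteredGaussianProcess.aemeasurable {X : Ω → ℝ → ℝ}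
    (hX : CenteredGaussianProcess P X) (t : ℝ) : AEMeasurable (fun ω => X ω t) P := by
  simpa using hX.aemeasurable_sum (n := 1) (fun _ => t) (fun _ => 1)

lemma CenteredGaussianProcess.memLp {X : Ω → ℝ → ℝ}
    (hX : CenteredGaussianProcess P X) (t : ℝ) : MemLp (fun ω => X ω t) 2 P := by
  obtain ⟨v, hv⟩ := hX 1 (fun _ => t) (fun _ => 1)
  simp only [Finset.univ_unique, Finset.sum_const, Finset.card_singleton, one_mul, one_smul] at hv
  have h : MemLp id 2 (Measure.map (fun ω => X ω t) P) := by
    rw [hv]; exact memLp_id_gaussianReal 2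
  exact (memLp_map_measure_iff (by fun_prop) (hX.aemeasurable t)).1 h

lemma CenteredGaussianProcess.integrable_mul {X : Ω → ℝ → ℝ}
    (hX : CenteredGaussianProcess P X) (s t : ℝ) : Integrable (fun ω => X ω s * X ω t) P :=
  (hX.memLp s).integrable_mul (hX.memLp t)

/-- A linear combination of the values has the centered Gaussian law whose variance is given by
the covariance function. -/
lemma CenteredGaussianProcess.map_sum {X : Ω → ℝ → ℝ}
    (hX : CenteredGaussianProcess P X) {n : ℕ} (t c : Fin n → ℝ) :
    Measure.map (fun ω => ∑ i, c i * X ω (t i)) P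
      = gaussianReal 0 (∑ i, ∑ j, c i * c j * ∫ ω, X ω (t i) * X ω (t j) ∂P).toNNReal := by
  obtain ⟨v, hv⟩ := hX n t c
  have hm := hX.aemeasurable_sum t c
  have h0 : ∫ ω, (∑ i, c i * X ω (t i)) ∂P = 0 := by
    have := integral_map hm (f := fun x : ℝ => x) (by fun_prop)
    rw [← this, hv, integral_id_gaussianReal]
  have h1 : (v : ℝ) = ∑ i, ∑ j, c i * c j * ∫ ω, X ω (t i) * X ω (t j) ∂P := by
    rw [← variance_id_gaussianReal (μ := 0) (v := v), ← hv,
      variance_map (by fun_prop) hm, Function.id_comp, variance_eq_integral hm, h0]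
    have : ∀ ω, ((∑ i, c i * X ω (t i)) - 0) ^ 2
        = ∑ i, ∑ j, c i * c j * (X ω (t i) * X ω (t j)) := fun ω => by
      rw [sub_zero, sq, Finset.sum_mul_sum]
      refine Finset.sum_congr rfl fun i _ => Finset.sum_congr rfl fun j _ => by ring
    simp_rw [this]
    have hi : ∀ i j, Integrable (fun ω => c i * c j * (X ω (t i) * X ω (t j))) P :=
      fun i j => (hX.integrable_mul _ _).const_mul _
    rw [integral_finsetSum _ fun i _ => integrable_finsetSum _ fun j _ => hi i j]
    refine Finset.sum_congr rfl fun i _ => ?_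
    rw [integral_finsetSum _ fun j _ => hi i j]
    refine Finset.sum_congr rfl fun j _ => ?_
    rw [integral_const_mul]
  rw [hv, ← h1, Real.toNNReal_coe]

/-- A centered Gaussian process is determined in law by its covariance: both processes give the
same law to every linear form, and these one-dimensional laws determine the joint law
(Cramér–Wold). -/
lemma CenteredGaussianProcess.sameFDD [IsProbabilityMeasure P] {X Y : Ω → ℝ → ℝ}
    (hX : CenteredGaussianProcess P X) (hY : CenteredGaussianProcess P Y)
    (h : ∀ s t, ∫ ω, X ω s * X ω t ∂P = ∫ ω, Y ω s * Y ω t ∂P) : SameFDD P X Y := by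
  intro n t
  have hXm : AEMeasurable (fun ω (i : Fin n) => X ω (t i)) P :=
    aemeasurable_pi_iff.2 fun i => hX.aemeasurable _
  have hYm : AEMeasurable (fun ω (i : Fin n) => Y ω (t i)) P :=
    aemeasurable_pi_iff.2 fun i => hY.aemeasurable _
  refine ⟨hXm, hYm, ?_⟩
  have := Measure.isProbabilityMeasure_map hXm
  have := Measure.isProbabilityMeasure_map hYm
  apply Measure.ext_of_charFunDual
  ext L
  have hL : ∀ x : Fin n → ℝ, L x = ∑ i, L (fun j => if i = j then 1 else 0) * x i := fun x => by
    have := LinearMap.pi_apply_eq_sum_univ (L : (Fin n → ℝ) →ₗ[ℝ] ℝ) x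
    simpa [mul_comm] using this
  rw [charFunDual_eq_charFun_map_one, charFunDual_eq_charFun_map_one,
    AEMeasurable.map_map_of_aemeasurable (by fun_prop) hXm,
    AEMeasurable.map_map_of_aemeasurable (by fun_prop) hYm]
  congr 1
  have e : ∀ Z : Ω → ℝ → ℝ, (L ∘ fun ω (i : Fin n) => Z ω (t i))
      = fun ω => ∑ i, L (fun j => if i = j then 1 else 0) * Z ω (t i) := fun Z => by
    ext ω; exact hL _
  rw [e X, e Y, hX.map_sum, hY.map_sum]
  simp_rw [h]

end Gaussian

/-! ### Differences and integrals preserve equality in law -/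

section Transfer

variable {Ω : Type*} [MeasurableSpace Ω] {P : Measure Ω}

lemma SameFDD.fintype {X Y : Ω → ℝ → ℝ} (h : SameFDD P X Y) {ι : Type*} [Fintype ι]
    (t : ι → ℝ) :
    IdentDistrib (fun ω (i : ι) => X ω (t i)) (fun ω (i : ι) => Y ω (t i)) P P := by
  have e := Fintype.equivFin ι
  have := (h _ (t ∘ e.symm)).comp (u := fun x i => x (e i)) (by fun_prop)
  simpa [Function.comp_def] using this

lemma SameFDD.dh {X Y : Ω → ℝ → ℝ} (h : SameFDD P X Y) (a : ℝ) :
    SameFDD P (fun ω => dh a (X ω)) (fun ω => dh a (Y ω)) := by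
  intro n t
  exact (h.fintype (Sum.elim (fun i => t i + a) t)).comp
    (u := fun (x : Fin n ⊕ Fin n → ℝ) (i : Fin n) => x (Sum.inl i) - x (Sum.inr i)) (by fun_prop)

/-- Equality in law passes to almost sure limits. -/
lemma IdentDistrib.of_tendsto [IsFiniteMeasure P] {n : ℕ} {F G : ℕ → Ω → Fin n → ℝ}
    {f g : Ω → Fin n → ℝ} (h : ∀ N, IdentDistrib (F N) (G N) P P)
    (hF : ∀ ω, Filter.Tendsto (fun N => F N ω) Filter.atTop (nhds (f ω)))
    (hG : ∀ ω, Filter.Tendsto (fun N => G N ω) Filter.atTop (nhds (g ω))) :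
    IdentDistrib f g P P := by
  have hf : AEMeasurable f P :=
    aemeasurable_of_tendsto_metrizable_ae' (fun N => (h N).aemeasurable_fst) (.of_forall hF)
  have hg : AEMeasurable g P :=
    aemeasurable_of_tendsto_metrizable_ae' (fun N => (h N).aemeasurable_snd) (.of_forall hG)
  refine ⟨hf, hg, ?_⟩
  apply ext_of_forall_integral_eq_of_IsFiniteMeasure
  intro φ
  have key : ∀ {K : ℕ → Ω → Fin n → ℝ} {k : Ω → Fin n → ℝ}, (∀ N, AEMeasurable (K N) P) →
      (∀ ω, Filter.Tendsto (fun N => K N ω) Filter.atTop (nhds (k ω))) →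
      Filter.Tendsto (fun N => ∫ ω, φ (K N ω) ∂P) Filter.atTop (nhds (∫ ω, φ (k ω) ∂P)) := by
    intro K k hK hKk
    refine tendsto_integral_of_dominated_convergence (fun _ => ‖φ‖) (fun N => ?_)
      (integrable_const _) (fun N => .of_forall fun ω => φ.norm_coe_le_norm _)
      (.of_forall fun ω => (φ.continuous.tendsto _).comp (hKk ω))
    exact (φ.continuous.measurable.comp_aemeasurable (hK N)).aestronglyMeasurable
  rw [integral_map hf φ.continuous.aestronglyMeasurable,
    integral_map hg φ.continuous.aestronglyMeasurable]
  refine tendsto_nhds_unique (key (fun N => (h N).aemeasurable_fst) hF)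
    ((key (fun N => (h N).aemeasurable_snd) hG).congr fun N => ?_)
  rw [← integral_map (h N).aemeasurable_fst φ.continuous.aestronglyMeasurable,
    ← integral_map (h N).aemeasurable_snd φ.continuous.aestronglyMeasurable, (h N).map_eq]

/-- Left-endpoint Riemann sums of a continuous function over `[0, 1]` converge to its integral. -/
lemma tendsto_riemann_sum_unit {g : ℝ → ℝ} (hg : Continuous g) :
    Filter.Tendsto (fun N : ℕ => ∑ k : Fin (N + 1), ((N : ℝ) + 1)⁻¹ * g ((k : ℝ) / ((N : ℝ) + 1)))
      Filter.atTop (nhds (∫ s in (0:ℝ)..1, g s)) := by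
  rw [Metric.tendsto_atTop]
  intro ε hε
  have huc : UniformContinuousOn g (Set.Icc 0 1) :=
    isCompact_Icc.uniformContinuousOn_of_continuous hg.continuousOn
  obtain ⟨δ, hδ, hd⟩ := Metric.uniformContinuousOn_iff.1 huc (ε / 2) (half_pos hε)
  obtain ⟨N₀, hN₀⟩ := exists_nat_one_div_lt hδ
  refine ⟨N₀, fun N hN => ?_⟩
  have hNp : (0:ℝ) < (N : ℝ) + 1 := by positivity
  have hmesh : 1 / ((N : ℝ) + 1) < δ :=
    (one_div_le_one_div_of_le (by positivity) (by gcongr)).trans_lt hN₀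
  have hsum : ∫ s in (0:ℝ)..1, g s = ∑ k ∈ Finset.range (N + 1),
      ∫ s in ((k : ℝ) / ((N : ℝ) + 1))..(((k + 1 : ℕ) : ℝ) / ((N : ℝ) + 1)), g s := by
    rw [intervalIntegral.sum_integral_adjacent_intervals
      (a := fun k : ℕ => (k : ℝ) / ((N : ℝ) + 1)) fun k _ => hg.intervalIntegrable _ _]
    congr 1
    · simp
    · push_cast; field_simp
  rw [Fin.sum_univ_eq_sum_range (fun k => ((N : ℝ) + 1)⁻¹ * g ((k : ℝ) / ((N : ℝ) + 1))), hsum,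
    dist_eq_norm, ← Finset.sum_sub_distrib]
  have hk : ∀ k ∈ Finset.range (N + 1), ‖((N : ℝ) + 1)⁻¹ * g ((k : ℝ) / ((N : ℝ) + 1)) -
      ∫ s in ((k : ℝ) / ((N : ℝ) + 1))..(((k + 1 : ℕ) : ℝ) / ((N : ℝ) + 1)), g s‖
      ≤ ε / 2 * ((N : ℝ) + 1)⁻¹ := by
    intro k hk
    have hk1 : (k : ℝ) + 1 ≤ (N : ℝ) + 1 := by exact_mod_cast Finset.mem_range.1 hk
    set a := (k : ℝ) / ((N : ℝ) + 1) with ha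
    set b := ((k + 1 : ℕ) : ℝ) / ((N : ℝ) + 1) with hb
    have hba : b - a = ((N : ℝ) + 1)⁻¹ := by rw [ha, hb]; push_cast; field_simp; ring
    have ha0 : 0 ≤ a := by positivity
    have hb1 : b ≤ 1 := by rw [hb, div_le_one hNp]; push_cast; exact hk1
    have hab : a ≤ b := by have : 0 < ((N : ℝ) + 1)⁻¹ := by positivity
                           linarith
    have hc : ((N : ℝ) + 1)⁻¹ * g a = ∫ _s in a..b, g a := by
      rw [intervalIntegral.integral_const, hba, smul_eq_mul]
    rw [hc, ← intervalIntegral.integral_sub (by simp) (hg.intervalIntegrable _ _)]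
    have := intervalIntegral.norm_integral_le_of_norm_le_const (a := a) (b := b) (C := ε / 2)
      (f := fun s => g a - g s) fun s hs => by
        rw [Set.uIoc_of_le hab] at hs
        rw [← dist_eq_norm]
        refine (hd a ⟨ha0, hab.trans hb1⟩ s ⟨ha0.trans hs.1.le, hs.2.trans hb1⟩ ?_).le
        rw [Real.dist_eq, abs_sub_comm, abs_of_pos (sub_pos.2 hs.1)]
        have := hs.2
        rw [one_div] at hmesh
        linarith
    rwa [hba, abs_of_pos (by positivity)] at this
  refine ((norm_sum_le _ _).trans (Finset.sum_le_sum hk)).trans_lt ?_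
  rw [Finset.sum_const, Finset.card_range, nsmul_eq_mul]
  push_cast
  field_simp
  norm_num

lemma J_eq_mul (f : ℝ → ℝ) (t : ℝ) : J f t = t * ∫ s in (0:ℝ)..1, f (t * s) := by
  rw [intervalIntegral.mul_integral_comp_mul_left]
  simp [J]

/-- Integration preserves equality of finite-dimensional distributions for processes with
continuous paths, the integrals being limits of Riemann sums. -/
lemma SameFDD.J [IsFiniteMeasure P] {X Y : Ω → ℝ → ℝ} (h : SameFDD P X Y)
    (hX : ∀ ω, Continuous (X ω)) (hY : ∀ ω, Continuous (Y ω)) :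
    SameFDD P (fun ω => J (X ω)) (fun ω => J (Y ω)) := by
  intro n t
  have lim : ∀ Z : Ω → ℝ → ℝ, (∀ ω, Continuous (Z ω)) → ∀ ω, Filter.Tendsto
      (fun (N : ℕ) (i : Fin n) => t i * ∑ k : Fin (N + 1),
        ((N : ℝ) + 1)⁻¹ * Z ω (t i * ((k : ℝ) / ((N : ℝ) + 1)))) Filter.atTop
      (nhds fun i => _root_.J (Z ω) (t i)) := by
    intro Z hZ ω
    refine tendsto_pi_nhds.2 fun i => ?_
    rw [J_eq_mul]
    exact (tendsto_riemann_sum_unit (g := fun s => Z ω (t i * s))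
      ((hZ ω).comp (by fun_prop))).const_mul _
  refine IdentDistrib.of_tendsto (fun N => ?_) (lim X hX) (lim Y hY)
  exact (h.fintype fun p : Fin n × Fin (N + 1) => t p.1 * ((p.2 : ℝ) / ((N : ℝ) + 1))).comp
    (u := fun x (i : Fin n) => t i * ∑ k : Fin (N + 1), ((N : ℝ) + 1)⁻¹ * x (i, k)) (by fun_prop)

lemma continuous_J {f : ℝ → ℝ} (hf : Continuous f) : Continuous (J f) :=
  intervalIntegral.continuous_primitive (fun a b => hf.intervalIntegrable a b) 0

lemma Jiter_succ (m : ℕ) (f : ℝ → ℝ) : Jiter (m + 1) f = J (Jiter m f) :=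
  Function.iterate_succ_apply' _ _ _

lemma dhIter_succ (M : ℕ) (a : ℝ) (f : ℝ → ℝ) : dhIter (M + 1) a f = dh a (dhIter M a f) :=
  Function.iterate_succ_apply' _ _ _

lemma continuous_Jiter (m : ℕ) {f : ℝ → ℝ} (hf : Continuous f) : Continuous (Jiter m f) := by
  induction m with
  | zero => exact hf
  | succ m ih => rw [Jiter_succ]; exact continuous_J ih

lemma continuous_dhIter (M : ℕ) (a : ℝ) {f : ℝ → ℝ} (hf : Continuous f) :
    Continuous (dhIter M a f) := by
  induction M with
  | zero => exact hf
  | succ M ih => rw [dhIter_succ]; unfold dh; fun_prop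

lemma SameFDD.dhIter_Jiter [IsFiniteMeasure P] {X Y : Ω → ℝ → ℝ} (h : SameFDD P X Y)
    (hX : ∀ ω, Continuous (X ω)) (hY : ∀ ω, Continuous (Y ω)) (M m : ℕ) (a : ℝ) :
    SameFDD P (fun ω => dhIter M a (Jiter m (X ω))) (fun ω => dhIter M a (Jiter m (Y ω))) := by
  induction M with
  | zero =>
    change SameFDD P (fun ω => Jiter m (X ω)) (fun ω => Jiter m (Y ω))
    induction m with
    | zero => exact h
    | succ m ih =>
      simp_rw [Jiter_succ]
      exact ih.J (fun ω => continuous_Jiter m (hX ω)) (fun ω => continuous_Jiter m (hY ω))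
  | succ M ih =>
    simp_rw [dhIter_succ]
    exact ih.dh a

end Transfer

/-! ### Change of scale and translation, path by path -/

section Pathwise

/-- `J^m` under the change of time scale `t ↦ a t`. -/
lemma Jiter_scale (m : ℕ) {a : ℝ} (ha : a ≠ 0) (c : ℝ) (f : ℝ → ℝ) (t : ℝ) :
    Jiter m (fun s => c * f (a * s)) t = c * (a⁻¹ ^ m * Jiter m f (a * t)) := by
  induction m generalizing t with
  | zero => simp [Jiter]
  | succ m ih =>
    rw [Jiter_succ, Jiter_succ]
    simp only [J, ih, intervalIntegral.integral_const_mul]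
    rw [intervalIntegral.integral_comp_mul_left _ ha]
    simp only [mul_zero, smul_eq_mul, pow_succ]
    ring

/-- `Δ_1^M` becomes `Δ_a^M` under the change of time scale `t ↦ a t`. -/
lemma dhIter_scale (M : ℕ) (a c : ℝ) (f : ℝ → ℝ) (t : ℝ) :
    dhIter M 1 (fun s => c * f (a * s)) t = c * dhIter M a f (a * t) := by
  induction M generalizing t with
  | zero => rfl
  | succ M ih =>
    rw [dhIter_succ, dhIter_succ]
    simp only [dh, ih]
    rw [mul_add, mul_one]
    ring

/-- The moving integral `t ↦ ∫_t^{t+a} f`, which is `Δ_a J f` for continuous `f`. -/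
noncomputable def movInt (a : ℝ) (f : ℝ → ℝ) : ℝ → ℝ := fun t => ∫ s in t..t + a, f s

lemma dh_J (a : ℝ) {f : ℝ → ℝ} (hf : Continuous f) : dh a (J f) = movInt a f := by
  ext t
  exact intervalIntegral.integral_interval_sub_left (hf.intervalIntegrable _ _)
    (hf.intervalIntegrable _ _)

lemma movInt_eq (a : ℝ) (f : ℝ → ℝ) (t : ℝ) : movInt a f t = ∫ s in (0:ℝ)..a, f (s + t) := by
  rw [intervalIntegral.integral_comp_add_right]
  simp [movInt, add_comm]

lemma dhIter_movInt (M : ℕ) (a : ℝ) {f : ℝ → ℝ} (hf : Continuous f) :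
    dhIter M a (movInt a f) = movInt a (dhIter M a f) := by
  induction M with
  | zero => rfl
  | succ M ih =>
    have hc := continuous_dhIter M a hf
    rw [dhIter_succ, dhIter_succ, ih]
    ext t
    simp only [dh, movInt_eq]
    rw [← intervalIntegral.integral_sub]
    · simp only [add_assoc]
    all_goals exact (hc.comp (by fun_prop)).intervalIntegrable _ _

/-- `Δ_a^{M+1} J^{m+1} = (Δ_a J) Δ_a^M J^m` on continuous functions. -/
lemma dhIter_Jiter_succ (M m : ℕ) (a : ℝ) {f : ℝ → ℝ} (hf : Continuous f) :
    dhIter (M + 1) a (Jiter (m + 1) f) = movInt a (dhIter M a (Jiter m f)) := by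
  rw [← dhIter_movInt M a (continuous_Jiter m hf), ← dh_J a (continuous_Jiter m hf), Jiter_succ]
  rfl

/-- For `m ≤ M`, the operator `Δ_a^M J^m` commutes with translations and maps constants to
constants. Without `m ≤ M` the base point `0` of `J` would be felt through polynomials. -/
lemma dhIter_Jiter_shift (M m : ℕ) (hm : m ≤ M) (a u c : ℝ) {f : ℝ → ℝ} (hf : Continuous f) :
    ∃ c' : ℝ, ∀ t, dhIter M a (Jiter m fun s => f (s + u) - c) t
      = dhIter M a (Jiter m f) (t + u) - c' := by
  have hg : Continuous fun s => f (s + u) - c := by fun_prop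
  induction m generalizing M with
  | zero =>
    clear hm
    induction M with
    | zero => exact ⟨c, fun t => rfl⟩
    | succ M ih =>
      obtain ⟨c', h⟩ := ih
      refine ⟨0, fun t => ?_⟩
      rw [dhIter_succ, dhIter_succ]
      simp only [dh, h]
      rw [add_right_comm]
      ring
  | succ m ih =>
    obtain ⟨M, rfl⟩ : ∃ N, M = N + 1 := ⟨M - 1, by omega⟩
    obtain ⟨c', h⟩ := ih M (by omega)
    have hc := continuous_dhIter M a (continuous_Jiter m hf)
    refine ⟨a * c', fun t => ?_⟩
    rw [dhIter_Jiter_succ M m a hg, dhIter_Jiter_succ M m a hf]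
    simp only [movInt_eq, h]
    have hi : Continuous fun s => dhIter M a (Jiter m f) (s + t + u) := hc.comp (by fun_prop)
    rw [intervalIntegral.integral_sub (hi.intervalIntegrable _ _) (by simp)]
    simp [add_assoc]

end Pathwise

/-! ### Scaling and increments of fractional Brownian motion -/

section FractionalBrownianMotion

variable {Ω : Type*} [MeasurableSpace Ω] {P : Measure Ω} [IsProbabilityMeasure P]
  {H : ℝ} {B : Ω → ℝ → ℝ}

/-- `B^H` is `H`-self-similar. -/
lemma sameFDD_scale (hGauss : CenteredGaussianProcess P B)
    (hcov : ∀ t r : ℝ, ∫ ω, B ω t * B ω r ∂P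
      = (|t| ^ (2 * H) + |r| ^ (2 * H) - |t - r| ^ (2 * H)) / 2) {a : ℝ} (ha : 0 < a) :
    SameFDD P (fun ω t => a ^ (-H) * B ω (a * t)) B := by
  refine CenteredGaussianProcess.sameFDD (fun n t c => ?_) hGauss fun s t => ?_
  · obtain ⟨v, hv⟩ := hGauss n (fun i => a * t i) (fun i => c i * a ^ (-H))
    exact ⟨v, by simpa only [mul_assoc] using hv⟩
  · have : ∀ ω, a ^ (-H) * B ω (a * s) * (a ^ (-H) * B ω (a * t))
        = a ^ (-(2 * H)) * (B ω (a * s) * B ω (a * t)) := fun ω => by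
      rw [show -(2 * H) = -H + -H by ring, Real.rpow_add ha]; ring
    simp_rw [this]
    rw [integral_const_mul, hcov, hcov, ← mul_sub]
    simp only [abs_mul, abs_of_pos ha]
    rw [Real.mul_rpow ha.le (abs_nonneg _), Real.mul_rpow ha.le (abs_nonneg _),
      Real.mul_rpow ha.le (abs_nonneg _), Real.rpow_neg ha.le]
    have := (Real.rpow_pos_of_pos ha (2 * H)).ne'
    field_simp

/-- `B^H` has stationary increments. -/
lemma sameFDD_shift (hH : 0 < H) (hGauss : CenteredGaussianProcess P B)
    (hcov : ∀ t r : ℝ, ∫ ω, B ω t * B ω r ∂P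
      = (|t| ^ (2 * H) + |r| ^ (2 * H) - |t - r| ^ (2 * H)) / 2) (u : ℝ) :
    SameFDD P (fun ω t => B ω (t + u) - B ω u) B := by
  refine CenteredGaussianProcess.sameFDD (fun n t c => ?_) hGauss fun s t => ?_
  · -- The extra time `u` carries the coefficient `-∑ c i`.
    obtain ⟨v, hv⟩ := hGauss (n + 1) (Fin.cons u fun i => t i + u) (Fin.cons (-∑ i, c i) c)
    refine ⟨v, ?_⟩
    rw [← hv]
    congr 1
    ext ω
    simp only [Fin.sum_univ_succ, Fin.cons_zero, Fin.cons_succ, mul_sub,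
      Finset.sum_sub_distrib, ← Finset.sum_mul]
    ring
  · have e : ∀ ω, (B ω (s + u) - B ω u) * (B ω (t + u) - B ω u)
        = B ω (s + u) * B ω (t + u) - B ω (s + u) * B ω u
          - (B ω u * B ω (t + u) - B ω u * B ω u) := fun ω => by ring
    have hi := hGauss.integrable_mul
    simp_rw [e]
    have hd : ∀ p q r v, Integrable (fun ω => B ω p * B ω q - B ω r * B ω v) P :=
      fun p q r v => (hi p q).sub (hi r v)
    rw [integral_sub (hd _ _ _ _) (hd _ _ _ _),
      integral_sub (hi _ _) (hi _ _), integral_sub (hi _ _) (hi _ _)]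
    simp only [hcov]
    have h1 : u - (t + u) = -t := by ring
    rw [add_sub_add_right_eq_sub, add_sub_cancel_right, h1, abs_neg, sub_self, abs_zero,
      Real.zero_rpow (by positivity)]
    ring

end FractionalBrownianMotion

/-- for integers `M ≥ m ≥ 0` and `H ∈ (0,1)`, the family
`X^{(h)} = Δ_h^M J^m B^H`, `h > 0`, is parametrized `(m+H)`-self-similar (the law of
`(h^{-(m+H)} X^{(h)}_{ht})_t` does not depend on `h > 0`), and each `Δ_h^M J^m B^H`
has stationary increments. -/
theorem dhIter_iterated_integral_fBm_parametrized_selfSimilar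
    {Ω : Type*} [MeasurableSpace Ω] (P : Measure Ω) [IsProbabilityMeasure P]
    (H : ℝ) (hH : H ∈ Set.Ioo (0:ℝ) 1) (B : Ω → ℝ → ℝ)
    (hGauss : CenteredGaussianProcess P B)
    (hcont : ∀ ω, Continuous (B ω))
    (hcov : ∀ t r : ℝ, ∫ ω, B ω t * B ω r ∂P
      = (|t| ^ (2 * H) + |r| ^ (2 * H) - |t - r| ^ (2 * H)) / 2)
    (M m : ℕ) (hMm : m ≤ M) :
    (∀ h₁ h₂ : ℝ, 0 < h₁ → 0 < h₂ → ∀ (n : ℕ) (t : Fin n → ℝ),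
      Measure.map (fun ω (i : Fin n) =>
        h₁ ^ (-((m : ℝ) + H)) * dhIter M h₁ (Jiter m (B ω)) (h₁ * t i)) P
      = Measure.map (fun ω (i : Fin n) =>
        h₂ ^ (-((m : ℝ) + H)) * dhIter M h₂ (Jiter m (B ω)) (h₂ * t i)) P) ∧
    (∀ h : ℝ, 0 < h → ∀ h' : ℝ, 0 < h' →
      StationaryProc P (fun ω => dh h' (dhIter M h (Jiter m (B ω))))) := by

  constructor
  · -- Each rescaled vector has the law of `Δ_1^M J^m B`, which does not involve the step.
    have key : ∀ h : ℝ, 0 < h → ∀ (n : ℕ) (t : Fin n → ℝ),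
        Measure.map (fun ω (i : Fin n) =>
          h ^ (-((m : ℝ) + H)) * dhIter M h (Jiter m (B ω)) (h * t i)) P
        = Measure.map (fun ω (i : Fin n) => dhIter M 1 (Jiter m (B ω)) (t i)) P := by
      intro h hh n t
      have hS := (sameFDD_scale hGauss hcov hh).dhIter_Jiter
        (fun ω => continuous_const.mul ((hcont ω).comp (by fun_prop))) hcont M m 1
      rw [← (hS n t).map_eq]
      congr 1
      ext ω i
      have e : Jiter m (fun s => h ^ (-H) * B ω (h * s))
          = fun s => (h ^ (-H) * h⁻¹ ^ m) * Jiter m (B ω) (h * s) := by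
        ext s; rw [Jiter_scale m hh.ne', mul_assoc]
      beta_reduce
      rw [e, dhIter_scale]
      congr 1
      rw [neg_add, Real.rpow_add hh, Real.rpow_neg hh.le (m : ℝ), Real.rpow_natCast, inv_pow,
        mul_comm]
    intro h₁ h₂ hh₁ hh₂ n t
    rw [key h₁ hh₁, key h₂ hh₂]
  · intro h _ h' _ u n t
    have hS := ((sameFDD_shift hH.1 hGauss hcov u).dhIter_Jiter
      (fun ω => ((hcont ω).comp (by fun_prop)).sub continuous_const) hcont M m h).dh h'
    rw [← (hS n t).map_eq]
    congr 1
    ext ω i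
    obtain ⟨c, hc⟩ := dhIter_Jiter_shift M m hMm h u (B ω u) (hcont ω)
    simp only [dh, hc]
    rw [add_right_comm]
    ring
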